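/- Let σ ∈ (0,1] and let α satisfy (3+2σ)/4 < α < min{3/2, 1+σ}. Then W_{α,σ} is not a critical Hardy-weight for (−Δ_ℕ)^σ: there exists a nonzero W̃ : ℕ → [0,∞) such that Q^σ(f) ≥ Σ_{n≥1}(W_{α,σ}(n)+W̃(n))·f(n)² for every finitely supported f : ℕ → ℝ. -/

import Mathlib

open Real Filter

/-- Generalized binomial coefficient via the Gamma function. -/
noncomputable def rbinom (a b : ℝ) : ℝ :=
  Real.Gamma (a + 1) / (Real.Gamma (b + 1) * Real.Gamma (a - b + 1))

/-- Kernel of the fractional Laplacian `(-Δ_ℕ)^σ` on the discrete half-line. -/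
noncomputable def Kker (σ : ℝ) (m n : ℕ) : ℝ :=
  (-1 : ℝ) ^ (m + n) *
    (rbinom (2 * σ) (σ + m - n) - rbinom (2 * σ) (σ + m + n))

/-- Quadratic form of `(-Δ_ℕ)^σ` (used for finitely supported `f` with `f 0 = 0`). -/
noncomputable def Qform (σ : ℝ) (f : ℕ → ℝ) : ℝ :=
  ∑' m : ℕ, ∑' n : ℕ, Kker σ m n * f m * f n

/-- The Hardy-weight `W_{α,σ}`. -/
noncomputable def Wweight (σ α : ℝ) (n : ℕ) : ℝ :=
  4 ^ σ * (Real.Gamma (3/2 - α + σ) * Real.Gamma α /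
            (Real.Gamma (α - σ) * Real.Gamma (3/2 - α))) *
    (Real.Gamma (n + α - σ - 1) * Real.Gamma (n - α + 2) /
      (Real.Gamma (n - α + σ + 2) * Real.Gamma (n + α - 1)))

/-- The Riesz potential `I_α`. -/
noncomputable def Riesz (α : ℝ) (n : ℕ) : ℝ :=
  (4 * n / (4 ^ α * Real.sqrt 2)) * Real.Gamma (3/2 - α) *
    Real.Gamma (n + α - 1) / (Real.Gamma α * Real.Gamma (n - α + 2))


/-! ### Part A: the coefficients -/

noncomputable def aN (σ : ℝ) (k : ℕ) : ℝ := (-1 : ℝ) ^ k * rbinom (2 * σ) (σ + k)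

lemma rg (x : ℝ) : (Real.Gamma x)⁻¹ = x * (Real.Gamma (x + 1))⁻¹ := by
  by_cases hx : x = 0
  · subst hx; simp
  · rw [Real.Gamma_add_one hx, mul_inv]
    field_simp

lemma rg' (x y : ℝ) (h : y = x + 1) : (Real.Gamma x)⁻¹ = x * (Real.Gamma y)⁻¹ := by
  rw [h, ← rg]

lemma aN_eq (σ : ℝ) (k : ℕ) : aN σ k = (-1 : ℝ) ^ k * (Real.Gamma (2 * σ + 1) *
    ((Real.Gamma (σ + k + 1))⁻¹ * (Real.Gamma (σ - k + 1))⁻¹)) := by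
  unfold aN rbinom
  rw [show 2 * σ - (σ + k) + 1 = σ - k + 1 by ring, div_eq_mul_inv, mul_inv]

lemma aN_rec (σ : ℝ) (k : ℕ) : (σ + k + 1) * aN σ (k + 1) = (k - σ) * aN σ k := by
  rw [aN_eq, aN_eq]
  push_cast
  rw [rg' (σ + k + 1) (σ + (k + 1) + 1) (by ring), rg' (σ - (k + 1) + 1) (σ - k + 1) (by ring)]
  ring

lemma aN_pascal (σ : ℝ) (hσ : 0 ≤ σ) (k : ℕ) :
    aN (σ + 1) (k + 1) = 2 * aN σ (k + 1) - aN σ (k + 2) - aN σ k := by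
  simp only [aN_eq]
  push_cast
  rw [show 2 * (σ + 1) + 1 = (2 * σ + 2) + 1 by ring, Real.Gamma_add_one (by positivity),
    show 2 * σ + 2 = (2 * σ + 1) + 1 by ring, Real.Gamma_add_one (by positivity)]
  rw [rg' (σ + k + 1) (σ + (k + 1) + 1) (by ring),
    rg' (σ + (k + 1) + 1) (σ + 1 + (k + 1) + 1) (by ring),
    rg' (σ - (k + 1) + 1) (σ + 1 - (k + 1) + 1) (by ring),
    rg' (σ - (k + 2) + 1) (σ - (k + 1) + 1) (by ring),
    rg' (σ - (k + 1) + 1) (σ + 1 - (k + 1) + 1) (by ring),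
    show σ + (k + 2) + 1 = σ + 1 + (k + 1) + 1 by ring,
    show σ - k + 1 = σ + 1 - (k + 1) + 1 by ring]
  ring

lemma aN_pascal0 (σ : ℝ) (hσ : 0 ≤ σ) :
    aN (σ + 1) 0 = 2 * aN σ 0 - 2 * aN σ 1 := by
  simp only [aN_eq]
  push_cast
  rw [show 2 * (σ + 1) + 1 = (2 * σ + 2) + 1 by ring, Real.Gamma_add_one (by positivity),
    show 2 * σ + 2 = (2 * σ + 1) + 1 by ring, Real.Gamma_add_one (by positivity)]
  rw [rg' (σ + 0 + 1) (σ + 1 + 0 + 1) (by ring),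
    rg' (σ - 1 + 1) (σ - 0 + 1) (by ring),
    rg' (σ - 0 + 1) (σ + 1 - 0 + 1) (by ring),
    show σ + 1 + 1 = σ + 1 + 0 + 1 by ring]
  ring

lemma aN_zero_pos (σ : ℝ) (hσ : 0 < σ) : 0 < aN σ 0 := by
  rw [aN_eq]
  have h1 := Real.Gamma_pos_of_pos (show 0 < 2 * σ + 1 by positivity)
  have h2 := Real.Gamma_pos_of_pos (show 0 < σ + 1 by positivity)
  simp
  positivity

lemma aN_nonpos (σ : ℝ) (hσ : 0 < σ) (hσ1 : σ ≤ 1) (k : ℕ) : aN σ (k + 1) ≤ 0 := by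
  induction k with
  | zero =>
    have h := aN_rec σ 0
    have h0 := aN_zero_pos σ hσ
    push_cast at h
    by_contra hc
    push Not at hc
    nlinarith [mul_pos hσ h0, mul_pos hσ hc]
  | succ k ih =>
    have h := aN_rec σ (k + 1)
    push_cast at h
    have hk : (0 : ℝ) ≤ k := Nat.cast_nonneg k
    by_contra hc
    push Not at hc
    have h1 : 0 < (σ + (k + 1) + 1) * aN σ (k + 1 + 1) := by positivity
    have h2 : ((k : ℝ) + 1 - σ) * aN σ (k + 1) ≤ 0 :=
      mul_nonpos_of_nonneg_of_nonpos (by linarith) ih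
    linarith

lemma aN_diff (σ : ℝ) (k : ℕ) :
    (σ + k + 1) * (aN σ (k + 1) - aN σ k) = -(1 + 2 * σ) * aN σ k := by
  have h := aN_rec σ k
  linarith

lemma aN_mono_step (σ : ℝ) (hσ : 0 < σ) (hσ1 : σ ≤ 1) (k : ℕ) : aN σ (k + 1) ≤ aN σ (k + 2) := by
  have h := aN_diff σ (k + 1)
  have h1 := aN_nonpos σ hσ hσ1 k
  have h2 : 0 ≤ (σ + (k + 1 : ℕ) + 1) * (aN σ (k + 1 + 1) - aN σ (k + 1)) := by
    rw [h]; nlinarith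
  have h3 := nonneg_of_mul_nonneg_right h2 (by positivity)
  linarith

lemma aN_mono (σ : ℝ) (hσ : 0 < σ) (hσ1 : σ ≤ 1) {i j : ℕ} (hi : 1 ≤ i) (hij : i ≤ j) :
    aN σ i ≤ aN σ j := by
  induction j, hij using Nat.le_induction with
  | base => exact le_rfl
  | succ j hj ih =>
    obtain ⟨k, rfl⟩ : ∃ k, j = k + 1 := ⟨j - 1, by omega⟩
    exact ih.trans (aN_mono_step σ hσ hσ1 k)

lemma aN_summable (σ : ℝ) (hσ : 0 < σ) (hσ1 : σ ≤ 1) : Summable (fun k => aN σ (k + 1)) := by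
  have key : ∀ n : ℕ, ∑ k ∈ Finset.range n, (-aN σ (k + 1)) =
      ((σ + n + 1) * aN σ (n + 1) - (σ + 1) * aN σ 1) / (2 * σ) := by
    intro n
    induction n with
    | zero => simp
    | succ n ih =>
      rw [Finset.sum_range_succ, ih]
      have h := aN_rec σ (n + 1)
      push_cast at h ⊢
      field_simp
      linarith
  have : Summable (fun k => -aN σ (k + 1)) := by
    refine summable_of_sum_range_le (c := (- (σ + 1) * aN σ 1) / (2 * σ)) ?_ ?_
    · intro n; linarith [aN_nonpos σ hσ hσ1 n]
    · intro n
      rw [key]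
      gcongr
      have : (σ + n + 1) * aN σ (n + 1) ≤ 0 :=
        mul_nonpos_of_nonneg_of_nonpos (by positivity) (aN_nonpos σ hσ hσ1 n)
      linarith
  simpa using this.neg

lemma rbinom_symm (σ x : ℝ) : rbinom (2 * σ) (σ - x) = rbinom (2 * σ) (σ + x) := by
  unfold rbinom
  rw [show 2 * σ - (σ - x) + 1 = σ + x + 1 by ring, show 2 * σ - (σ + x) + 1 = σ - x + 1 by ring,
    mul_comm (Real.Gamma (σ - x + 1))]

noncomputable def aZ (σ : ℝ) (k : ℤ) : ℝ := aN σ k.natAbs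

lemma Kker_eq (σ : ℝ) (m n : ℕ) : Kker σ m n = aZ σ (m - n) - aZ σ (m + n) := by
  have h2 : aZ σ (m + n) = (-1 : ℝ) ^ (m + n) * rbinom (2 * σ) (σ + m + n) := by
    unfold aZ aN
    rw [show ((m : ℤ) + n).natAbs = m + n by omega]
    push_cast
    rw [add_assoc]
  have h1 : aZ σ (m - n) = (-1 : ℝ) ^ (m + n) * rbinom (2 * σ) (σ + m - n) := by
    unfold aZ aN
    rcases le_total n m with h | h
    · obtain ⟨d, rfl⟩ := Nat.exists_eq_add_of_le h
      rw [show (((n + d : ℕ) : ℤ) - n).natAbs = d by omega]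
      have : (-1 : ℝ) ^ (n + d + n) = (-1) ^ d := by
        rw [show n + d + n = d + 2 * n by ring, pow_add, pow_mul]; simp
      rw [this]
      push_cast
      congr 2; ring
    · obtain ⟨d, rfl⟩ := Nat.exists_eq_add_of_le h
      rw [show ((m : ℤ) - (m + d : ℕ)).natAbs = d by omega]
      have : (-1 : ℝ) ^ (m + (m + d)) = (-1) ^ d := by
        rw [show m + (m + d) = d + 2 * m by ring, pow_add, pow_mul]; simp
      rw [this]
      push_cast
      rw [show σ + m - (m + d) = σ - d by ring, rbinom_symm]
  rw [h1, h2]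
  unfold Kker
  ring

lemma Kker_symm (σ : ℝ) (m n : ℕ) : Kker σ m n = Kker σ n m := by
  rw [Kker_eq, Kker_eq]
  unfold aZ
  rw [show ((m : ℤ) - n).natAbs = ((n : ℤ) - m).natAbs by omega, add_comm (m : ℤ)]

lemma Kker_nonpos (σ : ℝ) (hσ : 0 < σ) (hσ1 : σ ≤ 1) {m n : ℕ} (h : m ≠ n) :
    Kker σ m n ≤ 0 := by
  rw [Kker_eq]
  unfold aZ
  have := aN_mono σ hσ hσ1 (i := ((m : ℤ) - n).natAbs) (j := ((m : ℤ) + n).natAbs)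
    (by omega) (by omega)
  linarith

/-- weighted summability of the kernel -/
lemma Kker_summable (σ : ℝ) (hσ : 0 < σ) (hσ1 : σ ≤ 1) (m : ℕ) :
    Summable (fun n : ℕ => |Kker σ m n| * n) := by
  have hS := (aN_summable σ hσ hσ1).neg
  rw [← summable_nat_add_iff (m + 1)]
  have hS2 : Summable (fun n : ℕ => ((1 + 2 * σ) * (2 * m) * (m + 1)) * (-aN σ (n + 1))) :=
    hS.mul_left _
  refine Summable.of_nonneg_of_le (fun n => by positivity) (fun n => ?_) hS2
  have h1 : Kker σ m (n + (m + 1)) ≤ 0 := Kker_nonpos σ hσ hσ1 (by omega)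
  rw [abs_of_nonpos h1, Kker_eq]
  unfold aZ
  rw [show ((m : ℤ) - (n + (m + 1) : ℕ)).natAbs = n + 1 by omega,
    show ((m : ℤ) + (n + (m + 1) : ℕ)).natAbs = n + 1 + 2 * m by omega]
  have key : ∀ j : ℕ, (n + 1) * (aN σ (n + 1 + j) - aN σ (n + 1)) ≤
      (1 + 2 * σ) * j * (-aN σ (n + 1)) := by
    intro j
    induction j with
    | zero => simp
    | succ j ih =>
      have hd := aN_diff σ (n + 1 + j)
      have hm := aN_mono σ hσ hσ1 (i := n + 1) (j := n + 1 + j) (by omega) (by omega)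
      have hm2 := aN_mono σ hσ hσ1 (i := n + 1 + j) (j := n + 1 + j + 1) (by omega) (by omega)
      push_cast at hd ⊢
      have hx : ((n : ℝ) + 1) * (aN σ (n + 1 + j + 1) - aN σ (n + 1 + j)) ≤
          (σ + (n + 1 + j) + 1) * (aN σ (n + 1 + j + 1) - aN σ (n + 1 + j)) := by
        apply mul_le_mul_of_nonneg_right _ (by linarith)
        have : (0 : ℝ) ≤ j := Nat.cast_nonneg j
        linarith
      have hy : -(1 + 2 * σ) * aN σ (n + 1 + j) ≤ -(1 + 2 * σ) * aN σ (n + 1) := by nlinarith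
      have : n + 1 + (j + 1) = n + 1 + j + 1 := by ring
      rw [this]
      nlinarith
  have hk := key (2 * m)
  have hm := aN_mono σ hσ hσ1 (i := n + 1) (j := n + 1 + 2 * m) (by omega) (by omega)
  push_cast at hk ⊢
  calc -(aN σ (n + 1) - aN σ (n + 1 + 2 * m)) * ((n : ℝ) + (m + 1))
      ≤ -(aN σ (n + 1) - aN σ (n + 1 + 2 * m)) * (((n : ℝ) + 1) * (m + 1)) := by
        apply mul_le_mul_of_nonneg_left _ (by linarith)
        have : (0 : ℝ) ≤ n * m := by positivity
        nlinarith
    _ = ((n + 1) * (aN σ (n + 1 + 2 * m) - aN σ (n + 1))) * (m + 1) := by ring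
    _ ≤ ((1 + 2 * σ) * (2 * m) * (-aN σ (n + 1))) * (m + 1) := by gcongr
    _ = _ := by ring

/-! ### Part G: Gamma comparison -/

lemma gamma_le (a b c d a' b' c' d' : ℝ) (ha : 0 < a) (hb : 0 < b) (hc : 0 < c) (hd : 0 < d)
    (ha' : 0 < a') (hb' : 0 < b') (hc' : 0 < c') (hd' : 0 < d')
    (hsum : a + b + c + d = a' + b' + c' + d')
    (h : ∀ j : ℕ, (a + j) * (b + j) * (c + j) * (d + j) ≤
      (a' + j) * (b' + j) * (c' + j) * (d' + j)) :
    Real.Gamma a' * Real.Gamma b' * Real.Gamma c' * Real.Gamma d' ≤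
    Real.Gamma a * Real.Gamma b * Real.Gamma c * Real.Gamma d := by
  have T := fun x => Real.GammaSeq_tendsto_Gamma x
  refine le_of_tendsto_of_tendsto ((((T a').mul (T b')).mul (T c')).mul (T d'))
    ((((T a).mul (T b)).mul (T c)).mul (T d)) ?_
  filter_upwards [eventually_gt_atTop 0] with n hn
  have hn' : (0:ℝ) < n := by exact_mod_cast hn
  have key : ∀ a b c d : ℝ, Real.GammaSeq a n * Real.GammaSeq b n * Real.GammaSeq c n *
      Real.GammaSeq d n = ((n:ℝ) ^ (a + b + c + d) * (n.factorial : ℝ) ^ 4) /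
        ∏ j ∈ Finset.range (n + 1), ((a + j) * (b + j) * (c + j) * (d + j)) := by
    intro a b c d
    unfold Real.GammaSeq
    rw [Real.rpow_add hn', Real.rpow_add hn', Real.rpow_add hn', Finset.prod_mul_distrib,
      Finset.prod_mul_distrib, Finset.prod_mul_distrib]
    rw [div_mul_div_comm, div_mul_div_comm, div_mul_div_comm]
    ring
  rw [key, key, hsum]
  apply div_le_div_of_nonneg_left (by positivity)
  · exact Finset.prod_pos fun j _ => by positivity
  · exact Finset.prod_le_prod (fun j _ => by positivity) (fun j _ => h j)

lemma gamma_lt (a b c d a' b' c' d' : ℝ) (ha : 0 < a) (hb : 0 < b) (hc : 0 < c) (hd : 0 < d)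
    (ha' : 0 < a') (hb' : 0 < b') (hc' : 0 < c') (hd' : 0 < d')
    (hsum : a + b + c + d = a' + b' + c' + d')
    (h : ∀ j : ℕ, (a + j) * (b + j) * (c + j) * (d + j) <
      (a' + j) * (b' + j) * (c' + j) * (d' + j)) :
    Real.Gamma a' * Real.Gamma b' * Real.Gamma c' * Real.Gamma d' <
    Real.Gamma a * Real.Gamma b * Real.Gamma c * Real.Gamma d := by
  have h1 := gamma_le (a+1) (b+1) (c+1) (d+1) (a'+1) (b'+1) (c'+1) (d'+1)
    (by positivity) (by positivity) (by positivity) (by positivity)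
    (by positivity) (by positivity) (by positivity) (by positivity) (by linarith)
    (fun j => by
      have := h (j + 1)
      push_cast at this
      have e : ∀ x : ℝ, x + 1 + j = x + (j + 1) := fun x => by ring
      simp only [e]
      exact this.le)
  simp only [Real.Gamma_add_one ha.ne', Real.Gamma_add_one hb.ne', Real.Gamma_add_one hc.ne',
    Real.Gamma_add_one hd.ne', Real.Gamma_add_one ha'.ne', Real.Gamma_add_one hb'.ne',
    Real.Gamma_add_one hc'.ne', Real.Gamma_add_one hd'.ne'] at h1
  have h0 := h 0
  simp only [Nat.cast_zero, add_zero] at h0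
  have p := fun x (hx : 0 < x) => Real.Gamma_pos_of_pos hx
  have pa := p a ha
  have pb := p b hb
  have pc := p c hc
  have pd := p d hd
  have hX : 0 < Real.Gamma a * Real.Gamma b * Real.Gamma c * Real.Gamma d := by positivity
  by_contra hcon
  push Not at hcon
  have hP : 0 < a' * b' * c' * d' := by positivity
  have h2 := mul_le_mul_of_nonneg_left hcon hP.le
  have h3 := mul_lt_mul_of_pos_right h0 hX
  linarith

/-! ### Part B: Beta integrals -/

open MeasureTheory Set

lemma beta_real (p q : ℝ) (hp : 0 < p) (hq : 0 < q) :
    IntegrableOn (fun x : ℝ => x ^ (p - 1) * (1 - x) ^ (q - 1)) (Ioo 0 1) ∧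
    ∫ x in Ioo (0:ℝ) 1, x ^ (p - 1) * (1 - x) ^ (q - 1) =
      Real.Gamma p * Real.Gamma q / Real.Gamma (p + q) := by
  have hc := Complex.betaIntegral_convergent (u := p) (v := q) (by simpa) (by simpa)
  have heq : ∀ x ∈ Ioo (0:ℝ) 1, (x : ℂ) ^ ((p:ℂ) - 1) * (1 - (x : ℂ)) ^ ((q:ℂ) - 1) =
      ((x ^ (p - 1) * (1 - x) ^ (q - 1) : ℝ) : ℂ) := by
    intro x hx
    push_cast
    rw [Complex.ofReal_cpow hx.1.le, Complex.ofReal_cpow (by linarith [hx.2])]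
    push_cast; rfl
  rw [intervalIntegrable_iff_integrableOn_Ioo_of_le zero_le_one] at hc
  have hc2 : IntegrableOn (fun x : ℝ => ((x ^ (p - 1) * (1 - x) ^ (q - 1) : ℝ) : ℂ)) (Ioo 0 1) :=
    hc.congr_fun heq measurableSet_Ioo
  refine ⟨by have := hc2.re; simp at this; exact this, ?_⟩
  have h := Complex.betaIntegral_eq_Gamma_mul_div (p : ℂ) (q : ℂ) (by simpa) (by simpa)
  unfold Complex.betaIntegral at h
  rw [intervalIntegral.integral_of_le zero_le_one, integral_Ioc_eq_integral_Ioo,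
    setIntegral_congr_fun measurableSet_Ioo heq, integral_complex_ofReal] at h
  rw [← Complex.ofReal_add, Complex.Gamma_ofReal, Complex.Gamma_ofReal, Complex.Gamma_ofReal] at h
  exact_mod_cast h

lemma subst_image : (fun θ : ℝ => (1 - Real.cos θ) / 2) '' (Ioo 0 π) = Ioo 0 1 := by
  ext x
  constructor
  · rintro ⟨θ, hθ, rfl⟩
    have h1 : Real.cos θ < 1 := by
      have := Real.strictAntiOn_cos (a := 0) (b := θ) ⟨le_rfl, pi_pos.le⟩ ⟨hθ.1.le, hθ.2.le⟩ hθ.1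
      simpa using this
    have h2 : -1 < Real.cos θ := by
      have := Real.strictAntiOn_cos (a := θ) (b := π) ⟨hθ.1.le, hθ.2.le⟩ ⟨pi_pos.le, le_rfl⟩ hθ.2
      simpa using this
    constructor <;> simp only <;> linarith
  · rintro ⟨h0, h1⟩
    refine ⟨Real.arccos (1 - 2 * x), ⟨?_, ?_⟩, ?_⟩
    · rw [Real.arccos_pos]; linarith
    · rw [Real.arccos_lt_pi]; linarith
    · simp only
      rw [Real.cos_arccos (by linarith) (by linarith)]; ring

lemma subst_int (g : ℝ → ℝ) :
    (∫ x in Ioo (0:ℝ) 1, g x = ∫ θ in Ioo 0 π, (Real.sin θ / 2) * g ((1 - Real.cos θ) / 2)) ∧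
    (IntegrableOn g (Ioo 0 1) ↔
      IntegrableOn (fun θ => (Real.sin θ / 2) * g ((1 - Real.cos θ) / 2)) (Ioo 0 π)) := by
  have hd : ∀ θ ∈ Ioo 0 π, HasDerivWithinAt (fun θ : ℝ => (1 - Real.cos θ) / 2)
      (Real.sin θ / 2) (Ioo 0 π) θ := by
    intro θ _
    have := ((Real.hasDerivAt_cos θ).const_sub 1).div_const 2
    simpa using this.hasDerivWithinAt
  have hi : InjOn (fun θ : ℝ => (1 - Real.cos θ) / 2) (Ioo 0 π) := by
    intro x hx y hy h
    apply Real.injOn_cos ⟨hx.1.le, hx.2.le⟩ ⟨hy.1.le, hy.2.le⟩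
    simp only at h; linarith
  have habs : ∀ θ ∈ Ioo 0 π, |Real.sin θ / 2| • g ((1 - Real.cos θ) / 2) =
      (Real.sin θ / 2) * g ((1 - Real.cos θ) / 2) := by
    intro θ hθ
    rw [abs_of_pos (by have := Real.sin_pos_of_mem_Ioo hθ; positivity), smul_eq_mul]
  rw [← subst_image]
  constructor
  · rw [integral_image_eq_integral_abs_deriv_smul measurableSet_Ioo hd hi g]
    exact setIntegral_congr_fun measurableSet_Ioo habs
  · rw [integrableOn_image_iff_integrableOn_abs_deriv_smul measurableSet_Ioo hd hi g]
    exact integrableOn_congr_fun habs measurableSet_Ioo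

lemma cos_lt_one' {θ : ℝ} (hθ : θ ∈ Ioo 0 π) : Real.cos θ < 1 ∧ -1 < Real.cos θ := by
  have : (1 - Real.cos θ) / 2 ∈ Ioo (0:ℝ) 1 := by
    rw [← subst_image]; exact ⟨θ, hθ, rfl⟩
  constructor <;> linarith [this.1, this.2]

lemma sqrt_id {θ : ℝ} (hθ : θ ∈ Ioo 0 π) :
    ((1 - Real.cos θ) / 2) ^ (1/2 : ℝ) * (1 - (1 - Real.cos θ) / 2) ^ (1/2 : ℝ) = Real.sin θ / 2 := by
  have ⟨h1, h2⟩ := cos_lt_one' hθ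
  have hs := Real.sin_pos_of_mem_Ioo hθ
  rw [← Real.mul_rpow (by linarith) (by linarith), ← Real.sqrt_eq_rpow,
    Real.sqrt_eq_iff_mul_self_eq (by nlinarith) (by positivity)]
  nlinarith [Real.sin_sq_add_cos_sq θ]

lemma w_quarter {θ : ℝ} (hθ : θ ∈ Ioo 0 π) (s : ℝ) :
    ((1 - Real.cos θ) / 2) ^ s = 4 ^ (-s) * (2 - 2 * Real.cos θ) ^ s := by
  have ⟨h1, h2⟩ := cos_lt_one' hθ
  rw [show (1 - Real.cos θ) / 2 = 4⁻¹ * (2 - 2 * Real.cos θ) by ring,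
    Real.mul_rpow (by norm_num) (by linarith), Real.inv_rpow (by norm_num),
    Real.rpow_neg (by norm_num)]

lemma int_w (s : ℝ) (hs : -1/2 < s) :
    IntegrableOn (fun θ => (2 - 2 * Real.cos θ) ^ s) (Ioo 0 π) ∧
    ∫ θ in Ioo 0 π, (2 - 2 * Real.cos θ) ^ s =
      4 ^ s * (Real.Gamma (s + 1/2) * Real.Gamma (1/2) / Real.Gamma (s + 1)) := by
  obtain ⟨h1, h2⟩ := beta_real (s + 1/2) (1/2) (by linarith) (by norm_num)
  obtain ⟨e1, e2⟩ := subst_int (fun x => x ^ (s + 1/2 - 1) * (1 - x) ^ ((1/2 : ℝ) - 1))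
  have key : ∀ θ ∈ Ioo 0 π, (Real.sin θ / 2) * (((1 - Real.cos θ) / 2) ^ (s + 1/2 - 1) *
      (1 - (1 - Real.cos θ) / 2) ^ ((1/2 : ℝ) - 1)) = 4 ^ (-s) * (2 - 2 * Real.cos θ) ^ s := by
    intro θ hθ
    have ⟨a1, a2⟩ := cos_lt_one' hθ
    have hx : 0 < (1 - Real.cos θ) / 2 := by linarith
    have hy : 0 < 1 - (1 - Real.cos θ) / 2 := by linarith
    rw [← sqrt_id hθ, ← w_quarter hθ]
    rw [mul_mul_mul_comm, ← Real.rpow_add hx, ← Real.rpow_add hy]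
    ring_nf
    simp
  rw [e2, integrableOn_congr_fun key measurableSet_Ioo] at h1
  rw [e1, setIntegral_congr_fun measurableSet_Ioo key, integral_const_mul,
    show s + 1/2 + 1/2 = s + 1 by ring] at h2
  have h4 : (4:ℝ) ^ s * 4 ^ (-s) = 1 := by rw [← Real.rpow_add (by norm_num)]; simp
  constructor
  · have := Integrable.const_mul h1 (4 ^ s)
    simp only [← mul_assoc, h4, one_mul] at this
    exact this
  · rw [← h2, ← mul_assoc, h4, one_mul]

lemma int_ws (s : ℝ) (hs : -1/2 < s) :
    IntegrableOn (fun θ => (2 - 2 * Real.cos θ) ^ (s - 1) * Real.sin θ ^ 2) (Ioo 0 π) ∧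
    ∫ θ in Ioo 0 π, (2 - 2 * Real.cos θ) ^ (s - 1) * Real.sin θ ^ 2 =
      4 ^ s * (Real.Gamma (s + 1/2) * Real.Gamma (3/2) / Real.Gamma (s + 2)) := by
  obtain ⟨h1, h2⟩ := beta_real (s + 1/2) (3/2) (by linarith) (by norm_num)
  obtain ⟨e1, e2⟩ := subst_int (fun x => x ^ (s + 1/2 - 1) * (1 - x) ^ ((3/2 : ℝ) - 1))
  have key : ∀ θ ∈ Ioo 0 π, (Real.sin θ / 2) * (((1 - Real.cos θ) / 2) ^ (s + 1/2 - 1) *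
      (1 - (1 - Real.cos θ) / 2) ^ ((3/2 : ℝ) - 1)) =
      4 ^ (-s) * ((2 - 2 * Real.cos θ) ^ (s - 1) * Real.sin θ ^ 2) := by
    intro θ hθ
    have ⟨a1, a2⟩ := cos_lt_one' hθ
    have hx : 0 < (1 - Real.cos θ) / 2 := by linarith
    rw [show s + 1/2 - 1 = (s - 1) + 1/2 by ring, Real.rpow_add hx, w_quarter hθ,
      show (3/2 : ℝ) - 1 = 1/2 by norm_num, mul_assoc (4 ^ (-(s-1)) * _), sqrt_id hθ,
      show -(s-1) = -s + 1 by ring, Real.rpow_add (by norm_num : (0:ℝ) < 4), Real.rpow_one]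
    ring
  rw [e2, integrableOn_congr_fun key measurableSet_Ioo] at h1
  rw [e1, setIntegral_congr_fun measurableSet_Ioo key, integral_const_mul,
    show s + 1/2 + 3/2 = s + 2 by ring] at h2
  have h4 : (4:ℝ) ^ s * 4 ^ (-s) = 1 := by rw [← Real.rpow_add (by norm_num)]; simp
  constructor
  · have := Integrable.const_mul h1 (4 ^ s)
    simp only [← mul_assoc, h4, one_mul] at this ⊢
    exact this
  · rw [← h2, ← mul_assoc, h4, one_mul]

/-! ### Part C: Fourier coefficients -/

lemma w_nonneg (θ : ℝ) : 0 ≤ 2 - 2 * Real.cos θ := by linarith [Real.cos_le_one θ]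

lemma w_pos {θ : ℝ} (hθ : θ ∈ Ioo 0 π) : 0 < 2 - 2 * Real.cos θ := by
  linarith [(cos_lt_one' hθ).1]

lemma w_cont (σ : ℝ) (hσ : 0 ≤ σ) : Continuous (fun θ : ℝ => (2 - 2 * Real.cos θ) ^ σ) :=
  Continuous.rpow_const (by fun_prop) (fun _ => Or.inr hσ)

lemma J_int (σ : ℝ) (hσ : 0 ≤ σ) (k : ℕ) :
    IntegrableOn (fun θ : ℝ => (2 - 2 * Real.cos θ) ^ σ * Real.cos (k * θ)) (Ioo 0 π) := by
  have h : Continuous (fun θ : ℝ => (2 - 2 * Real.cos θ) ^ σ * Real.cos (k * θ)) :=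
    (w_cont σ hσ).mul (by fun_prop)
  exact (h.integrableOn_Icc (a := 0) (b := π)).mono_set Ioo_subset_Icc_self

lemma J_zero (σ : ℝ) (hσ : 0 ≤ σ) :
    ∫ θ in Ioo 0 π, (2 - 2 * Real.cos θ) ^ σ = π * aN σ 0 := by
  rw [(int_w σ (by linarith)).2, aN_eq]
  have hd := Real.Gamma_mul_Gamma_add_half (σ + 1/2)
  rw [show σ + 1/2 + 1/2 = σ + 1 by ring, show 2 * (σ + 1/2) = 2 * σ + 1 by ring,
    show 1 - (2 * σ + 1) = -(2 * σ) by ring, Real.rpow_neg (by norm_num),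
    Real.rpow_mul (by norm_num)] at hd
  norm_num at hd
  have h1 := Real.Gamma_pos_of_pos (show 0 < σ + 1 by positivity)
  have h4 : (0:ℝ) < 4 ^ σ := by positivity
  have hpi : √π * √π = π := Real.mul_self_sqrt pi_pos.le
  have hG : Real.Gamma (2 * σ + 1) * √π = Real.Gamma (σ + 1/2) * Real.Gamma (σ + 1) * 4 ^ σ := by
    norm_num
    rw [hd]; field_simp
  rw [Real.Gamma_one_half_eq]
  simp only [Nat.cast_zero, add_zero, sub_zero, pow_zero, one_mul]
  generalize √π = r at *
  rw [← hpi, show r * r * (Real.Gamma (2 * σ + 1) * ((Real.Gamma (σ + 1))⁻¹ * (Real.Gamma (σ + 1))⁻¹))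
    = r * (Real.Gamma (2 * σ + 1) * r) * ((Real.Gamma (σ + 1))⁻¹ * (Real.Gamma (σ + 1))⁻¹) by ring,
    hG]
  field_simp

lemma int3 {f g h : ℝ → ℝ} {μ : Measure ℝ} (hf : Integrable f μ) (hg : Integrable g μ)
    (hh : Integrable h μ) : ∫ x, (f x - g x - h x) ∂μ = ∫ x, f x ∂μ - ∫ x, g x ∂μ - ∫ x, h x ∂μ := by
  rw [← integral_sub hf hg]
  exact integral_sub (hf.sub hg) hh

lemma J_eq (k : ℕ) : ∀ σ : ℝ, 0 ≤ σ →
    ∫ θ in Ioo 0 π, (2 - 2 * Real.cos θ) ^ σ * Real.cos (k * θ) = π * aN σ k := by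
  induction k using Nat.strong_induction_on with
  | _ k ih =>
    intro σ hσ
    match k, ih with
    | 0, _ => simpa using J_zero σ hσ
    | 1, _ =>
      have hp := aN_pascal0 σ hσ
      have e : ∀ θ ∈ Ioo 0 π, (2 - 2 * Real.cos θ) ^ σ * Real.cos ((1:ℕ) * θ) =
          (2 - 2 * Real.cos θ) ^ σ - (1/2) * (2 - 2 * Real.cos θ) ^ (σ + 1) := by
        intro θ hθ
        rw [Real.rpow_add_one (w_pos hθ).ne']
        push_cast; rw [one_mul]; ring
      rw [setIntegral_congr_fun measurableSet_Ioo e, integral_sub, integral_const_mul,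
        J_zero σ hσ, J_zero (σ + 1) (by linarith), hp]
      · ring
      · exact (int_w σ (by linarith)).1
      · exact Integrable.const_mul (int_w (σ + 1) (by linarith)).1 _
    | k + 2, ih =>
      have hp := aN_pascal σ hσ k
      have e : ∀ θ ∈ Ioo 0 π, (2 - 2 * Real.cos θ) ^ σ * Real.cos ((k + 2 : ℕ) * θ) =
          2 * ((2 - 2 * Real.cos θ) ^ σ * Real.cos ((k + 1 : ℕ) * θ)) -
          (2 - 2 * Real.cos θ) ^ (σ + 1) * Real.cos ((k + 1 : ℕ) * θ) -
          (2 - 2 * Real.cos θ) ^ σ * Real.cos (k * θ) := by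
        intro θ hθ
        rw [Real.rpow_add_one (w_pos hθ).ne']
        push_cast
        rw [show ((k:ℝ) + 2) * θ = (k + 1) * θ + θ by ring,
          show (k:ℝ) * θ = (k + 1) * θ - θ by ring, Real.cos_add, Real.cos_sub]
        ring
      have i1 : Integrable (fun θ => 2 * ((2 - 2 * Real.cos θ) ^ σ * Real.cos ((k + 1 : ℕ) * θ)))
        (volume.restrict (Ioo 0 π)) := Integrable.const_mul (J_int σ hσ (k+1)) 2
      have i2 := J_int (σ + 1) (by linarith) (k + 1)
      have i3 := J_int σ hσ k
      rw [setIntegral_congr_fun measurableSet_Ioo e, int3 i1 i2 i3,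
        integral_const_mul, ih (k+1) (by omega) σ hσ, ih (k+1) (by omega) (σ+1) (by linarith),
        ih k (by omega) σ hσ, hp]
      ring

/-! ### Part D: sine integrals -/

noncomputable def Fs (s : ℝ) (n : ℕ) : ℝ :=
  Real.Gamma (3/2) * 4 ^ s * Real.Gamma (s + 1/2) * n *
    (∏ j ∈ Finset.range (n - 1), ((j:ℝ) + 1 - s)) / Real.Gamma (n + s + 1)

lemma abs_sin_le (n : ℕ) (θ : ℝ) : |Real.sin (n * θ)| ≤ n * |Real.sin θ| := by
  induction n with
  | zero => simp
  | succ n ih =>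
    push_cast
    rw [add_mul, one_mul, Real.sin_add]
    calc _ ≤ |Real.sin (n * θ)| * |Real.cos θ| + |Real.cos (n * θ)| * |Real.sin θ| := by
          rw [← abs_mul, ← abs_mul]; exact abs_add_le _ _
      _ ≤ |Real.sin (n * θ)| * 1 + 1 * |Real.sin θ| := by
          gcongr
          · exact Real.abs_cos_le_one _
          · exact Real.abs_cos_le_one _
      _ ≤ _ := by linarith

lemma M_meas (s : ℝ) (n : ℕ) :
    Measurable (fun θ : ℝ => (2 - 2 * Real.cos θ) ^ (s - 1) * Real.sin θ * Real.sin (n * θ)) := by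
  fun_prop

lemma M_bound (s : ℝ) (n : ℕ) {θ : ℝ} :
    ‖(2 - 2 * Real.cos θ) ^ (s - 1) * Real.sin θ * Real.sin (n * θ)‖ ≤
      n * ((2 - 2 * Real.cos θ) ^ (s - 1) * Real.sin θ ^ 2) := by
  have h0 : 0 ≤ (2 - 2 * Real.cos θ) ^ (s - 1) := Real.rpow_nonneg (w_nonneg θ) _
  rw [Real.norm_eq_abs, abs_mul, abs_mul, abs_of_nonneg h0, ← sq_abs (Real.sin θ)]
  calc _ ≤ (2 - 2 * Real.cos θ) ^ (s - 1) * |Real.sin θ| * (n * |Real.sin θ|) := by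
        gcongr
        exact abs_sin_le n θ
    _ = _ := by ring

lemma M_int (s : ℝ) (hs : -1/2 < s) (n : ℕ) :
    IntegrableOn (fun θ : ℝ => (2 - 2 * Real.cos θ) ^ (s - 1) * Real.sin θ * Real.sin (n * θ))
      (Ioo 0 π) := by
  refine Integrable.mono' (Integrable.const_mul (int_ws s hs).1 n)
    (M_meas s n).aestronglyMeasurable (Filter.Eventually.of_forall fun θ => M_bound s n)

lemma Fs_rec0 (s : ℝ) (hs : -1/2 < s) : Fs s 2 = 2 * Fs s 1 - Fs (s + 1) 1 := by
  unfold Fs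
  simp
  rw [show s + 1 + 2⁻¹ = (s + 2⁻¹) + 1 by ring, Real.Gamma_add_one (show s + 2⁻¹ ≠ 0 by linarith),
    show 1 + (s + 1) + 1 = (1 + s + 1) + 1 by ring, show 2 + s + 1 = (1 + s + 1) + 1 by ring,
    Real.Gamma_add_one (show 1 + s + 1 ≠ 0 by linarith), Real.rpow_add_one (by norm_num)]
  have h := Real.Gamma_pos_of_pos (show 0 < 1 + s + 1 by linarith)
  have h2 : 1 + s + 1 ≠ 0 := by linarith
  field_simp
  ring

lemma Fs_rec (s : ℝ) (hs : -1/2 < s) (k : ℕ) :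
    Fs s (k + 3) = 2 * Fs s (k + 2) - Fs (s + 1) (k + 2) - Fs s (k + 1) := by
  unfold Fs
  rw [show k + 3 - 1 = k + 1 + 1 by omega, show k + 2 - 1 = k + 1 by omega,
    show k + 1 - 1 = k by omega]
  have e : ∏ j ∈ Finset.range (k + 1), ((j:ℝ) + 1 - (s + 1)) =
      (∏ j ∈ Finset.range k, ((j:ℝ) + 1 - s)) * (-s) := by
    rw [Finset.prod_range_succ']
    push_cast
    congr 1
    · exact Finset.prod_congr rfl fun j _ => by ring
    · ring
  rw [e, Finset.prod_range_succ, Finset.prod_range_succ]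
  push_cast
  have hk : (0:ℝ) ≤ k := Nat.cast_nonneg k
  rw [show s + 1 + 1/2 = (s + 1/2) + 1 by ring, Real.Gamma_add_one (show s + 1/2 ≠ 0 by linarith),
    show (k:ℝ) + 3 + s + 1 = (k + 1 + s + 1) + 1 + 1 by ring,
    show (k:ℝ) + 2 + s + 1 = (k + 1 + s + 1) + 1 by ring,
    show (k:ℝ) + 2 + (s + 1) + 1 = (k + 1 + s + 1) + 1 + 1 by ring,
    Real.Gamma_add_one (show (k:ℝ) + 1 + s + 1 + 1 ≠ 0 by linarith),
    Real.Gamma_add_one (show (k:ℝ) + 1 + s + 1 ≠ 0 by linarith), Real.rpow_add_one (by norm_num)]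
  have h := Real.Gamma_pos_of_pos (show 0 < (k:ℝ) + 1 + s + 1 by linarith)
  have h2 : (k:ℝ) + 1 + s + 1 ≠ 0 := by linarith
  have h3 : (k:ℝ) + 1 + s + 1 + 1 ≠ 0 := by linarith
  generalize Real.Gamma ((k:ℝ) + 1 + s + 1) = G at *
  generalize Real.Gamma (s + 1/2) = G2 at *
  generalize Real.Gamma (3/2) = G3 at *
  generalize (∏ j ∈ Finset.range k, ((j:ℝ) + 1 - s)) = P at *
  generalize (4:ℝ) ^ s = F4 at *
  field_simp
  ring

lemma M_eq (n : ℕ) : ∀ s : ℝ, -1/2 < s →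
    ∫ θ in Ioo 0 π, (2 - 2 * Real.cos θ) ^ (s - 1) * Real.sin θ * Real.sin (n * θ) = Fs s n := by
  have step : ∀ n : ℕ, ∀ s : ℝ, -1/2 < s →
      ∫ θ in Ioo 0 π, (2 - 2 * Real.cos θ) ^ (s - 1) * Real.sin θ * Real.sin ((n + 2 : ℕ) * θ) =
      2 * (∫ θ in Ioo 0 π, (2 - 2 * Real.cos θ) ^ (s - 1) * Real.sin θ * Real.sin ((n + 1 : ℕ) * θ)) -
      (∫ θ in Ioo 0 π, (2 - 2 * Real.cos θ) ^ (s + 1 - 1) * Real.sin θ * Real.sin ((n + 1 : ℕ) * θ)) -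
      (∫ θ in Ioo 0 π, (2 - 2 * Real.cos θ) ^ (s - 1) * Real.sin θ * Real.sin (n * θ)) := by
    intro k s hs
    have e : ∀ θ ∈ Ioo 0 π,
        (2 - 2 * Real.cos θ) ^ (s - 1) * Real.sin θ * Real.sin ((k + 2 : ℕ) * θ) =
        2 * ((2 - 2 * Real.cos θ) ^ (s - 1) * Real.sin θ * Real.sin ((k + 1 : ℕ) * θ)) -
        (2 - 2 * Real.cos θ) ^ (s + 1 - 1) * Real.sin θ * Real.sin ((k + 1 : ℕ) * θ) -
        (2 - 2 * Real.cos θ) ^ (s - 1) * Real.sin θ * Real.sin (k * θ) := by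
      intro θ hθ
      rw [show s + 1 - 1 = (s - 1) + 1 by ring, Real.rpow_add_one (w_pos hθ).ne']
      push_cast
      rw [show ((k:ℝ) + 2) * θ = (k + 1) * θ + θ by ring,
        show (k:ℝ) * θ = (k + 1) * θ - θ by ring, Real.sin_add, Real.sin_sub]
      ring
    have i1 : Integrable (fun θ => 2 *
        ((2 - 2 * Real.cos θ) ^ (s - 1) * Real.sin θ * Real.sin ((k + 1 : ℕ) * θ)))
      (volume.restrict (Ioo 0 π)) := Integrable.const_mul (M_int s hs (k+1)) 2
    have i2 := M_int (s + 1) (by linarith) (k + 1)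
    have i3 := M_int s hs k
    rw [setIntegral_congr_fun measurableSet_Ioo e, int3 i1 i2 i3,
      integral_const_mul]
  have one : ∀ s : ℝ, -1/2 < s →
    ∫ θ in Ioo 0 π, (2 - 2 * Real.cos θ) ^ (s - 1) * Real.sin θ * Real.sin ((1:ℕ) * θ) = Fs s 1 := by
    intro s hs
    have h := (int_ws s hs).2
    simp only [sq, ← mul_assoc] at h
    simp only [Nat.cast_one, one_mul]
    rw [h]
    unfold Fs
    simp
    rw [show 1 + s + 1 = s + 2 by ring]
    ring
  induction n using Nat.strong_induction_on with
  | _ n ih =>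
    intro s hs
    match n, ih with
    | 0, _ => simp [Fs]
    | 1, _ => exact one s hs
    | 2, _ =>
      rw [step 0 s hs, one s hs, one (s+1) (by linarith), Fs_rec0 s hs]
      simp
    | k + 3, ih =>
      rw [step (k+1) s hs, ih (k+2) (by omega) s hs, ih (k+2) (by omega) (s+1) (by linarith),
        ih (k+1) (by omega) s hs, Fs_rec s hs]

/-! ### Part E: pointwise Fourier series -/

lemma aZ_summable (σ : ℝ) (hσ : 0 < σ) (hσ1 : σ ≤ 1) : Summable (aZ σ) := by
  have h := (summable_nat_add_iff (f := aN σ) 1).1 (aN_summable σ hσ hσ1)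
  refine Summable.of_nat_of_neg ?_ ?_
  · simpa [aZ] using h
  · simpa [aZ] using h

lemma aZ_fourier (σ : ℝ) (hσ : 0 < σ) (n : ℤ) :
    ∫ x in (-π)..π, Complex.exp (-(n * x * Complex.I)) * (((2 - 2 * Real.cos x) ^ σ : ℝ) : ℂ) =
      2 * π * aZ σ n := by
  set g : ℝ → ℂ := fun x =>
    Complex.exp (-(n * x * Complex.I)) * (((2 - 2 * Real.cos x) ^ σ : ℝ) : ℂ) with hg
  have hgc : Continuous g := by
    have := w_cont σ hσ.le
    fun_prop
  have hi : ∀ a b, IntervalIntegrable g volume a b := fun a b => hgc.intervalIntegrable a b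
  rw [← intervalIntegral.integral_add_adjacent_intervals (hi (-π) 0) (hi 0 π)]
  have h1 : ∫ x in (-π)..0, g x = ∫ x in (0)..π, g (-x) := by
    rw [intervalIntegral.integral_comp_neg]; simp
  have hgn : Continuous (fun x => g (-x)) := hgc.comp continuous_neg
  rw [h1, ← intervalIntegral.integral_add (hgn.intervalIntegrable _ _) (hi 0 π)]
  have h2 : ∀ x : ℝ, g (-x) + g x =
      ((2 * ((2 - 2 * Real.cos x) ^ σ * Real.cos (n.natAbs * x)) : ℝ) : ℂ) := by
    intro x
    simp only [hg, Real.cos_neg]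
    have hc : Real.cos (n.natAbs * x) = Real.cos (n * x) := by
      rcases Int.natAbs_eq n with h | h
      · conv_rhs => rw [h]
        simp
      · conv_rhs => rw [h]
        simp
    rw [hc, ← add_mul]
    push_cast
    rw [Complex.cos]
    rw [show -((n:ℂ) * -x * Complex.I) = n * x * Complex.I by ring,
      show -((n:ℂ) * x * Complex.I) = -(n * x) * Complex.I by ring]
    ring
  simp only [h2]
  rw [intervalIntegral.integral_ofReal, intervalIntegral.integral_const_mul,
    intervalIntegral.integral_of_le pi_pos.le, integral_Ioc_eq_integral_Ioo, J_eq _ σ hσ.le]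
  unfold aZ
  push_cast
  ring

lemma aZ_hasSum (σ : ℝ) (hσ : 0 < σ) (hσ1 : σ ≤ 1) (θ : ℝ) :
    HasSum (fun k : ℤ => (aZ σ k : ℂ) * Complex.exp (k * θ * Complex.I))
      (((2 - 2 * Real.cos θ) ^ σ : ℝ) : ℂ) := by
  have : Fact (0 < 2 * π) := ⟨Real.two_pi_pos⟩
  have hcont : Continuous (fun x : Real.Angle => (((2 - 2 * Real.Angle.cos x) ^ σ : ℝ) : ℂ)) := by
    refine Complex.continuous_ofReal.comp (Continuous.rpow_const ?_ (fun _ => Or.inr hσ.le))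
    exact continuous_const.sub (continuous_const.mul Real.Angle.continuous_cos)
  let f : C(AddCircle (2 * π), ℂ) := ⟨_, hcont⟩
  have hf : ∀ x : ℝ, f (x : AddCircle (2 * π)) = (((2 - 2 * Real.cos x) ^ σ : ℝ) : ℂ) := fun x => rfl
  have hpi : (π : ℂ) ≠ 0 := by exact_mod_cast pi_ne_zero
  have hcoef : ∀ n : ℤ, fourierCoeff f n = aZ σ n := by
    intro n
    rw [fourierCoeff_eq_intervalIntegral _ _ (-π), show -π + 2 * π = π by ring]
    have : ∀ x : ℝ, fourier (-n) (x : AddCircle (2 * π)) • f (x : AddCircle (2 * π)) =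
        Complex.exp (-(n * x * Complex.I)) * (((2 - 2 * Real.cos x) ^ σ : ℝ) : ℂ) := by
      intro x
      rw [hf, fourier_coe_apply, smul_eq_mul]
      congr 2
      push_cast
      field_simp
    simp only [this]
    rw [aZ_fourier σ hσ, Complex.real_smul]
    push_cast
    field_simp
  have hs : Summable (fourierCoeff f) := by
    have h := (aZ_summable σ hσ hσ1)
    rw [show fourierCoeff f = fun n => ((aZ σ n : ℝ) : ℂ) from funext hcoef]
    exact_mod_cast h
  have := has_pointwise_sum_fourier_series_of_summable hs (θ : AddCircle (2 * π))
  rw [hf] at this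
  refine this.congr_fun (fun k => ?_)
  rw [hcoef, fourier_coe_apply, smul_eq_mul]
  congr 2
  push_cast
  field_simp

lemma K_hasSum (σ : ℝ) (hσ : 0 < σ) (hσ1 : σ ≤ 1) (m : ℕ) (θ : ℝ) :
    HasSum (fun n : ℕ => Kker σ m n * Real.sin (n * θ))
      ((2 - 2 * Real.cos θ) ^ σ * Real.sin (m * θ)) := by
  have h := (aZ_hasSum σ hσ hσ1 θ).mul_right (Complex.exp (-(m * θ) * Complex.I))
  have h2 := Complex.hasSum_im h
  have h3 := h2.neg
  have h4 : HasSum (fun k : ℤ => aZ σ k * Real.sin ((m - k) * θ))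
      ((2 - 2 * Real.cos θ) ^ σ * Real.sin (m * θ)) := by
    have hv : -((((2 - 2 * Real.cos θ) ^ σ : ℝ) : ℂ) * Complex.exp (-(m * θ) * Complex.I)).im =
        (2 - 2 * Real.cos θ) ^ σ * Real.sin (m * θ) := by
      rw [show -((m:ℂ) * θ) * Complex.I = ((-(m * θ) : ℝ) : ℂ) * Complex.I by push_cast; ring,
        Complex.im_ofReal_mul, Complex.exp_ofReal_mul_I_im, Real.sin_neg]
      ring
    rw [← hv]
    refine h3.congr_fun (fun k => ?_)
    rw [mul_assoc, ← Complex.exp_add, show (k:ℂ) * θ * Complex.I + -(m * θ) * Complex.I =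
      ((-((m - k) * θ) : ℝ) : ℂ) * Complex.I by push_cast; ring, Complex.im_ofReal_mul,
      Complex.exp_ofReal_mul_I_im, Real.sin_neg]
    ring
  have h5 := ((Equiv.subLeft (m : ℤ)).hasSum_iff).2 h4
  have h6 := h5.nat_add_neg
  convert h6 using 1
  · ext n
    simp only [Function.comp, Equiv.subLeft_apply, Kker_eq]
    push_cast
    rw [show (m:ℝ) - (m - n) = n by ring, show (m:ℝ) - (m - -n) = -n by ring, neg_mul, Real.sin_neg,
      sub_neg_eq_add]
    ring
  · simp

/-! ### Part F: action of the kernel on the sine integrals -/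

lemma K_F (σ : ℝ) (hσ : 0 < σ) (hσ1 : σ ≤ 1) (s : ℝ) (hs : -1/2 < s) (m : ℕ) :
    HasSum (fun n : ℕ => Kker σ m n * Fs s n) (Fs (s + σ) m) := by
  have hK := Kker_summable σ hσ hσ1 m
  have key := hasSum_integral_of_dominated_convergence (μ := volume.restrict (Ioo 0 π))
    (F := fun (n : ℕ) (θ : ℝ) => Kker σ m n *
      ((2 - 2 * Real.cos θ) ^ (s - 1) * Real.sin θ * Real.sin (n * θ)))
    (f := fun θ => (2 - 2 * Real.cos θ) ^ (s + σ - 1) * Real.sin θ * Real.sin (m * θ))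
    (fun n θ => |Kker σ m n| * n * ((2 - 2 * Real.cos θ) ^ (s - 1) * Real.sin θ ^ 2))
    (fun n => ((M_meas s n).const_mul _).aestronglyMeasurable)
    (fun n => Filter.Eventually.of_forall fun θ => by
      rw [norm_mul, Real.norm_eq_abs (Kker σ m n), mul_assoc |Kker σ m n|]
      exact mul_le_mul_of_nonneg_left (M_bound s n) (abs_nonneg _))
    (Filter.Eventually.of_forall fun θ => hK.mul_right _)
    (by
      simp only [tsum_mul_right]
      exact Integrable.const_mul (int_ws s hs).1 _)
    (by
      filter_upwards [ae_restrict_mem measurableSet_Ioo] with θ hθ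
      have h := (K_hasSum σ hσ hσ1 m θ).mul_left ((2 - 2 * Real.cos θ) ^ (s - 1) * Real.sin θ)
      rw [show s + σ - 1 = (s - 1) + σ by ring, Real.rpow_add (w_pos hθ)]
      rw [show (2 - 2 * Real.cos θ) ^ (s - 1) * (2 - 2 * Real.cos θ) ^ σ * Real.sin θ *
        Real.sin (m * θ) = (2 - 2 * Real.cos θ) ^ (s - 1) * Real.sin θ *
        ((2 - 2 * Real.cos θ) ^ σ * Real.sin (m * θ)) by ring]
      exact h.congr_fun fun n => by ring)
  rw [M_eq m (s + σ) (by linarith)] at key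
  refine key.congr_fun fun n => ?_
  rw [integral_const_mul, M_eq n s hs]

/-! ### Part H: assembly -/

lemma ground_state (S : Finset ℕ) (K : ℕ → ℕ → ℝ) (hsym : ∀ m n, K m n = K n m)
    (hK : ∀ m n, m ≠ n → K m n ≤ 0) (u V f : ℕ → ℝ) (hu : ∀ m ∈ S, 0 < u m)
    (hV : ∀ m ∈ S, V m * u m ≤ ∑ n ∈ S, K m n * u n) :
    ∑ m ∈ S, V m * f m ^ 2 ≤ ∑ m ∈ S, ∑ n ∈ S, K m n * f m * f n := by
  have h1 : ∑ m ∈ S, ∑ n ∈ S, (1/2 * (K m n * (f m ^ 2 * u n / u m)) +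
      1/2 * (K m n * (f n ^ 2 * u m / u n))) ≤ ∑ m ∈ S, ∑ n ∈ S, K m n * f m * f n := by
    refine Finset.sum_le_sum fun m hm => Finset.sum_le_sum fun n hn => ?_
    have um := hu m hm
    have un := hu n hn
    by_cases hmn : m = n
    · subst hmn
      apply le_of_eq
      field_simp
      ring
    · have hk := hK m n hmn
      have : f m * f n ≤ 1/2 * (f m ^ 2 * u n / u m + f n ^ 2 * u m / u n) := by
        have e : 1/2 * (f m ^ 2 * u n / u m + f n ^ 2 * u m / u n) - f m * f n =
            1/2 * (u m * u n) * (f m / u m - f n / u n) ^ 2 := by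
          field_simp
          ring
        have : 0 ≤ 1/2 * (u m * u n) * (f m / u m - f n / u n) ^ 2 := by positivity
        linarith
      have := mul_le_mul_of_nonpos_left this hk
      linarith
  have h2 : ∑ m ∈ S, ∑ n ∈ S, (1/2 * (K m n * (f m ^ 2 * u n / u m)) +
      1/2 * (K m n * (f n ^ 2 * u m / u n))) =
      ∑ m ∈ S, ∑ n ∈ S, K m n * (f m ^ 2 * u n / u m) := by
    simp only [Finset.sum_add_distrib, ← Finset.mul_sum]
    have : ∑ m ∈ S, ∑ n ∈ S, K m n * (f n ^ 2 * u m / u n) =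
        ∑ m ∈ S, ∑ n ∈ S, K m n * (f m ^ 2 * u n / u m) := by
      rw [Finset.sum_comm]
      exact Finset.sum_congr rfl fun m _ => Finset.sum_congr rfl fun n _ => by rw [hsym n m]
    rw [this]; ring
  rw [h2] at h1
  refine le_trans (Finset.sum_le_sum fun m hm => ?_) h1
  have um := hu m hm
  have : ∑ n ∈ S, K m n * (f m ^ 2 * u n / u m) = (f m ^ 2 / u m) * ∑ n ∈ S, K m n * u n := by
    rw [Finset.mul_sum]
    exact Finset.sum_congr rfl fun n _ => by ring
  rw [this]
  calc V m * f m ^ 2 = (f m ^ 2 / u m) * (V m * u m) := by field_simp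
    _ ≤ _ := mul_le_mul_of_nonneg_left (hV m hm) (by positivity)

lemma prod_gamma (s : ℝ) (hs : s < 1) (k : ℕ) :
    ∏ j ∈ Finset.range k, ((j:ℝ) + 1 - s) = Real.Gamma (k + 1 - s) / Real.Gamma (1 - s) := by
  have h0 := Real.Gamma_pos_of_pos (show 0 < 1 - s by linarith)
  induction k with
  | zero => simp [h0.ne']
  | succ k ih =>
    have hk : (0:ℝ) ≤ k := Nat.cast_nonneg k
    rw [Finset.prod_range_succ, ih]
    push_cast
    rw [show (k:ℝ) + 1 + 1 - s = (k + 1 - s) + 1 by ring,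
      Real.Gamma_add_one (show (k:ℝ) + 1 - s ≠ 0 by linarith)]
    ring

lemma Fs_eq (s : ℝ) (hs : s < 1) (n : ℕ) (hn : 1 ≤ n) :
    Fs s n = Real.Gamma (3/2) * 4 ^ s * Real.Gamma (s + 1/2) * n *
      (Real.Gamma (n - s) / Real.Gamma (1 - s)) / Real.Gamma (n + s + 1) := by
  unfold Fs
  rw [prod_gamma s hs]
  obtain ⟨k, rfl⟩ : ∃ k, n = k + 1 := ⟨n - 1, by omega⟩
  simp

lemma Fs_pos (s : ℝ) (hs0 : -1/2 < s) (hs : s < 1) (n : ℕ) (hn : 1 ≤ n) : 0 < Fs s n := by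
  rw [Fs_eq s hs n hn]
  have hn' : (1:ℝ) ≤ n := by exact_mod_cast hn
  have h1 := Real.Gamma_pos_of_pos (show (0:ℝ) < 3/2 by norm_num)
  have h2 := Real.Gamma_pos_of_pos (show 0 < s + 1/2 by linarith)
  have h3 := Real.Gamma_pos_of_pos (show 0 < 1 - s by linarith)
  have h4 := Real.Gamma_pos_of_pos (show 0 < n - s by linarith)
  have h5 := Real.Gamma_pos_of_pos (show 0 < n + s + 1 by linarith)
  positivity

lemma W_lt (σ α : ℝ) (hσ0 : 0 < σ) (hσ1 : σ ≤ 1)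
    (hα1 : (3 + 2 * σ) / 4 < α) (hα2 : α < 3/2) (hα3 : α < 1 + σ) (n : ℕ) (hn : 1 ≤ n) :
    Wweight σ α n < Fs (α - 1/2 - σ + σ) n / Fs (α - 1/2 - σ) n := by
  have hn' : (1:ℝ) ≤ n := by exact_mod_cast hn
  rw [Fs_eq _ (by linarith) n hn, Fs_eq _ (by linarith) n hn]
  unfold Wweight
  have P := fun x (hx : 0 < x) => Real.Gamma_pos_of_pos hx
  have key := gamma_lt (n + 1/2 - α) (n + α - σ + 1/2) (n - α + σ + 2) (n + α - 1)
    (n + α - σ - 1) (n - α + 2) (n + α + 1/2) (n + 1/2 + σ - α)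
    (by linarith) (by linarith) (by linarith) (by linarith)
    (by linarith) (by linarith) (by linarith) (by linarith) (by ring)
    (fun j => by
      have hj : (0:ℝ) ≤ j := Nat.cast_nonneg j
      have : 0 < 2 * ((n:ℝ) + j + 1/2) * σ * (3 * (α - (3 + 2 * σ) / 4)) := by
        have : 0 < α - (3 + 2 * σ) / 4 := by linarith
        positivity
      nlinarith)
  rw [show α - 1/2 - σ + σ = α - 1/2 by ring, show α - 1/2 + 1/2 = α by ring,
    show (n:ℝ) - (α - 1/2) = n + 1/2 - α by ring, show 1 - (α - 1/2) = 3/2 - α by ring,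
    show (n:ℝ) + (α - 1/2) + 1 = n + α + 1/2 by ring,
    show α - 1/2 - σ + 1/2 = α - σ by ring,
    show (n:ℝ) - (α - 1/2 - σ) = n + 1/2 + σ - α by ring,
    show 1 - (α - 1/2 - σ) = 3/2 - α + σ by ring,
    show (n:ℝ) + (α - 1/2 - σ) + 1 = n + α - σ + 1/2 by ring,
    show (4:ℝ) ^ (α - 1/2) = 4 ^ (α - 1/2 - σ) * 4 ^ σ by
      rw [← Real.rpow_add (by norm_num)]; congr 1; ring]
  have g1 := P (3/2) (by norm_num)
  have g2 := P α (by linarith)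
  have g3 := P (n + 1/2 - α) (by linarith)
  have g4 := P (3/2 - α) (by linarith)
  have g5 := P (n + α + 1/2) (by linarith)
  have g6 := P (α - σ) (by linarith)
  have g7 := P (n + 1/2 + σ - α) (by linarith)
  have g8 := P (3/2 - α + σ) (by linarith)
  have g9 := P (n + α - σ + 1/2) (by linarith)
  have g10 := P (n - α + σ + 2) (by linarith)
  have g11 := P (n + α - 1) (by linarith)
  have g12 := P (n + α - σ - 1) (by linarith)
  have g13 := P (n - α + 2) (by linarith)
  have f1 : (0:ℝ) < 4 ^ σ := by positivity
  have f2 : (0:ℝ) < 4 ^ (α - 1/2 - σ) := by positivity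
  have hn0 : (0:ℝ) < n := by linarith
  generalize (4:ℝ) ^ (α - 1/2 - σ) = F2 at *
  generalize (4:ℝ) ^ σ = F1 at *
  generalize Real.Gamma (3/2) = G1 at *
  generalize Real.Gamma α = G2 at *
  generalize Real.Gamma (n + 1/2 - α) = G3 at *
  generalize Real.Gamma (3/2 - α) = G4 at *
  generalize Real.Gamma (n + α + 1/2) = G5 at *
  generalize Real.Gamma (α - σ) = G6 at *
  generalize Real.Gamma (n + 1/2 + σ - α) = G7 at *
  generalize Real.Gamma (3/2 - α + σ) = G8 at *
  generalize Real.Gamma (n + α - σ + 1/2) = G9 at *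
  generalize Real.Gamma (n - α + σ + 2) = G10 at *
  generalize Real.Gamma (n + α - 1) = G11 at *
  generalize Real.Gamma (n + α - σ - 1) = G12 at *
  generalize Real.Gamma (n - α + 2) = G13 at *
  have e : G1 * (F2 * F1) * G2 * n * (G3 / G4) / G5 / (G1 * F2 * G6 * n * (G7 / G8) / G9) =
      F1 * (G8 * G2 / (G6 * G4)) * (G3 * G9 / (G5 * G7)) := by
    field_simp
  rw [e]
  apply mul_lt_mul_of_pos_left _ (by positivity)
  rw [div_lt_div_iff₀ (by positivity) (by positivity)]
  linarith

/-- For `(3+2σ)/4 < α < min(3/2, 1+σ)` the Hardy-weight `W_{α,σ}` is not critical. -/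
theorem stmt_10 (σ α : ℝ) (hσ0 : 0 < σ) (hσ1 : σ ≤ 1)
    (hα1 : (3 + 2 * σ) / 4 < α) (hα2 : α < min (3/2) (1 + σ)) :
    ∃ Wt : ℕ → ℝ, (∀ n, 0 ≤ Wt n) ∧ (∃ n, 1 ≤ n ∧ Wt n ≠ 0) ∧
      ∀ f : ℕ → ℝ, f 0 = 0 → (Function.support f).Finite →
        (∑' n : ℕ, (Wweight σ α n + Wt n) * (f n) ^ 2) ≤ Qform σ f := by
  obtain ⟨ha, hb⟩ := lt_min_iff.1 hα2
  have hW := W_lt σ α hσ0 hσ1 hα1 ha hb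
  set s := α - 1/2 - σ with hs
  have hs0 : -1/2 < s := by linarith
  have hs1 : s < 1 := by linarith
  refine ⟨fun n => if n = 0 then 0 else Fs (s + σ) n / Fs s n - Wweight σ α n, ?_,
    ⟨1, le_rfl, ?_⟩, ?_⟩
  · intro n
    by_cases h : n = 0
    · simp [h]
    · simp only [h, if_false]
      linarith [hW n (by omega)]
  · simp only [one_ne_zero, if_false]
    exact (sub_pos.2 (hW 1 le_rfl)).ne'
  · intro f hf0 hfin
    obtain ⟨N, hN⟩ := hfin.bddAbove
    set S := Finset.Icc 1 N with hS
    have hout : ∀ n, n ∉ S → f n = 0 := by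
      intro n hn
      by_contra hc
      have h1 : n ≤ N := hN hc
      have h2 : n ≠ 0 := fun h => hc (h ▸ hf0)
      exact hn (Finset.mem_Icc.2 ⟨by omega, h1⟩)
    have hQ : Qform σ f = ∑ m ∈ S, ∑ n ∈ S, Kker σ m n * f m * f n := by
      unfold Qform
      rw [tsum_eq_sum (s := S)]
      · refine Finset.sum_congr rfl fun m _ => tsum_eq_sum fun n hn => ?_
        rw [hout n hn, mul_zero]
      · intro m hm
        simp [hout m hm]
    have hL : (∑' n : ℕ, (Wweight σ α n + if n = 0 then 0 else Fs (s + σ) n / Fs s n - Wweight σ α n)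
        * (f n) ^ 2) = ∑ n ∈ S, (Fs (s + σ) n / Fs s n) * (f n) ^ 2 := by
      rw [tsum_eq_sum (s := S)]
      · refine Finset.sum_congr rfl fun n hn => ?_
        have : n ≠ 0 := by have := (Finset.mem_Icc.1 hn).1; omega
        simp [this]
      · intro n hn
        simp [hout n hn]
    rw [hQ, hL]
    apply ground_state S (Kker σ) (Kker_symm σ) (fun m n h => Kker_nonpos σ hσ0 hσ1 h) (Fs s)
    · intro m hm
      exact Fs_pos s hs0 hs1 m (Finset.mem_Icc.1 hm).1
    · intro m hm
      have hp := Fs_pos s hs0 hs1 m (Finset.mem_Icc.1 hm).1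
      rw [div_mul_cancel₀ _ hp.ne']
      have hsum := (K_F σ hσ0 hσ1 s hs0 m).neg
      have := sum_le_hasSum S (fun n hn => ?_) hsum
      · rw [Finset.sum_neg_distrib] at this
        linarith
      · rcases Nat.eq_zero_or_pos n with h | h
        · subst h; simp [Fs]
        · have h1 : m ≠ n := fun h => hn (h ▸ hm)
          have h2 := Kker_nonpos σ hσ0 hσ1 h1
          have h3 := Fs_pos s hs0 hs1 n h
          nlinarith
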